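/- arXiv:math/0509148 — 15 statements merged into one kernel-verified Lean document; each statement's English description precedes it below -/
import Mathlib

section
/- Let S be a (unital associative) ring and let R be a subring of S. Suppose S is generated as a ring by R together with a set T of elements each of which commutes with every element of R. If every element of R is a sum of commutators [x,y] = xy - yx of elements of R, then every element of S is a sum of commutators of elements of S. -/
/-- `a` is a (finite) sum of additive commutators `x*y - y*x` of elements of the ring. -/
def IsSumOfCommutators {A : Type*} [Ring A] (a : A) : Prop :=
  ∃ (n : ℕ) (x y : Fin n → A), a = ∑ i, (x i * y i - y i * x i)

theorem isSumOfCommutators_zero {A : Type*} [Ring A] : IsSumOfCommutators (0 : A) :=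
  ⟨0, fun _ => 0, fun _ => 0, by simp⟩

theorem isSumOfCommutators_add {A : Type*} [Ring A] {a b : A}
    (ha : IsSumOfCommutators a) (hb : IsSumOfCommutators b) : IsSumOfCommutators (a + b) := by
  obtain ⟨n, x, y, rfl⟩ := ha
  obtain ⟨m, z, w, rfl⟩ := hb
  refine ⟨n + m, Fin.append x z, Fin.append y w, ?_⟩
  simp [Fin.sum_univ_add]
  abel

theorem isSumOfCommutators_neg {A : Type*} [Ring A] {a : A}
    (ha : IsSumOfCommutators a) : IsSumOfCommutators (-a) := by
  obtain ⟨n, x, y, rfl⟩ := ha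
  exact ⟨n, y, x, by rw [← Finset.sum_neg_distrib]; simp⟩

/-- A product of an element of a commutator subring and an element centralizing it. -/
theorem isSumOfCommutators_mul {S : Type*} [Ring S] (R : Subring S)
    (hR : ∀ r : R, IsSumOfCommutators r) (r : R) (c : S)
    (hc : ∀ q ∈ R, c * q = q * c) : IsSumOfCommutators ((r : S) * c) := by
  obtain ⟨n, x, y, h⟩ := hR r
  refine ⟨n, fun i => x i, fun i => y i * c, ?_⟩
  rw [h]
  push_cast
  rw [Finset.sum_mul]
  refine Finset.sum_congr rfl fun i _ => ?_
  rw [sub_mul, mul_assoc, mul_assoc, mul_assoc, hc _ (x i).2]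

/-- If `R ⊆ S` are rings such that `R` is a commutator ring and `S` is generated over `R`
by elements centralizing `R`, then `S` is also a commutator ring. -/
theorem stmt_0 {S : Type*} [Ring S] (R : Subring S) (T : Set S)
    (hcomm : ∀ t ∈ T, ∀ r ∈ R, t * r = r * t)
    (hgen : Subring.closure ((R : Set S) ∪ T) = ⊤)
    (hR : ∀ r : R, IsSumOfCommutators r) :
    ∀ s : S, IsSumOfCommutators s := by
  intro s
  have hs : s ∈ Subring.closure ((R : Set S) ∪ T) := by rw [hgen]; trivial
  rw [Subring.mem_closure_iff] at hs
  have key : ∀ m ∈ Submonoid.closure ((R : Set S) ∪ T),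
      ∃ (r : R) (c : S), (∀ q ∈ R, c * q = q * c) ∧ m = r * c := by
    intro m hm
    induction hm using Submonoid.closure_induction with
    | mem x hx =>
      rcases hx with hx | hx
      · exact ⟨⟨x, hx⟩, 1, by simp, by simp⟩
      · exact ⟨1, x, hcomm x hx, by simp⟩
    | one => exact ⟨1, 1, by simp, by simp⟩
    | mul x y _ _ hx hy =>
      obtain ⟨r, c, hc, rfl⟩ := hx
      obtain ⟨q, d, hd, rfl⟩ := hy
      refine ⟨r * q, c * d, fun p hp => ?_, ?_⟩
      · rw [mul_assoc, hd p hp, ← mul_assoc, hc p hp, mul_assoc]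
      · push_cast
        rw [mul_assoc, ← mul_assoc c, hc q q.2]
        simp only [mul_assoc]
  induction hs using AddSubgroup.closure_induction with
  | mem x hx =>
    obtain ⟨r, c, hc, rfl⟩ := key x hx
    exact isSumOfCommutators_mul R hR r c hc
  | zero => exact isSumOfCommutators_zero
  | add x y _ _ hx hy => exact isSumOfCommutators_add hx hy
  | neg x _ hx => exact isSumOfCommutators_neg hx
end

section
/- Let F be a field and let R be a nonzero finite-dimensional F-algebra. Then R is not a commutator ring; that is, there exists an element of R that is not a sum of commutators [x,y] = xy - yx of elements of R. -/
open scoped TensorProduct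

/-- Over an algebraically closed field there is a nonzero trace functional. -/
theorem exists_trace_form (K : Type*) [Field K] [IsAlgClosed K] (A : Type*) [Ring A] [Nontrivial A]
    [Algebra K A] [FiniteDimensional K A] :
    ∃ t : A →ₗ[K] K, (∀ x y, t (x * y) = t (y * x)) ∧ ∃ a, t a ≠ 0 := by
  have : IsArtinianRing A := IsArtinianRing.of_finite K A
  let Q := A ⧸ Ring.jacobson A
  have : IsSemisimpleRing Q := inferInstance
  have : Nontrivial Q := Ideal.Quotient.nontrivial_iff.mpr (Ring.jacobson_lt_top A).ne
  have : FiniteDimensional K Q :=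
    Module.Finite.of_surjective (Ideal.Quotient.mkₐ K (Ring.jacobson A)).toLinearMap
      Ideal.Quotient.mk_surjective
  obtain ⟨n, d, hd, ⟨e⟩⟩ := IsSemisimpleRing.exists_algEquiv_pi_matrix_of_isAlgClosed K Q
  have hn : n ≠ 0 := by
    rintro rfl
    exact not_subsingleton Q e.toEquiv.subsingleton
  let i : Fin n := ⟨0, Nat.pos_of_ne_zero hn⟩
  let f : A →ₐ[K] Matrix (Fin (d i)) (Fin (d i)) K :=
    (Pi.evalAlgHom K _ i).comp (e.toAlgHom.comp (Ideal.Quotient.mkₐ K (Ring.jacobson A)))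
  have hf : Function.Surjective f := by
    intro m
    obtain ⟨q, hq⟩ := e.surjective (Pi.single i m)
    obtain ⟨a, rfl⟩ := Ideal.Quotient.mk_surjective q
    refine ⟨a, ?_⟩
    change e (Ideal.Quotient.mk _ a) i = m
    rw [hq]; simp
  refine ⟨(Matrix.traceLinearMap (Fin (d i)) K K).comp f.toLinearMap, fun x y => ?_, ?_⟩
  · simpa using Matrix.trace_mul_comm (f x) (f y)
  · let j : Fin (d i) := ⟨0, Nat.pos_of_ne_zero (hd i).out⟩
    obtain ⟨a, ha⟩ := hf (Matrix.single j j 1)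
    exact ⟨a, by simp [ha]⟩

/-- A nonzero finite-dimensional algebra over a field is not a commutator ring. -/
theorem stmt_2 (F : Type*) [Field F] (R : Type*) [Ring R] [Nontrivial R]
    [Algebra F R] [FiniteDimensional F R] :
    ∃ r : R, ¬ IsSumOfCommutators r := by
  by_contra! h
  obtain ⟨t, ht, a, ha⟩ := exists_trace_form (AlgebraicClosure F) (AlgebraicClosure F ⊗[F] R)
  have h1 : ∀ r : R, t (1 ⊗ₜ r) = 0 := by
    intro r
    obtain ⟨n, x, y, rfl⟩ := h r
    rw [TensorProduct.tmul_sum, map_sum]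
    refine Finset.sum_eq_zero fun i _ => ?_
    have := ht (1 ⊗ₜ x i) (1 ⊗ₜ y i)
    simp only [Algebra.TensorProduct.tmul_mul_tmul, mul_one] at this
    rw [TensorProduct.tmul_sub, map_sub, this, sub_self]
  apply ha
  induction a using TensorProduct.induction_on with
  | zero => simp
  | tmul k r =>
    have : k ⊗ₜ[F] r = k • ((1 : AlgebraicClosure F) ⊗ₜ[F] r) := by
      simp [TensorProduct.smul_tmul']
    rw [this, map_smul, h1, smul_zero]
  | add x y hx hy =>
    by_cases h2 : t x = 0
    · by_cases h3 : t y = 0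
      · rw [map_add, h2, h3, add_zero]
      · exact absurd (hy h3) h3
    · exact absurd (hx h2) h2
end

section
/- Let R be a ring, r an element of R, and e an idempotent of R; set f = 1 - e. Suppose that ere can be written as a sum of m1 commutators [e x e, e y e] of elements of the corner eRe, and frf can be written as a sum of m2 commutators [f z f, f w f] of elements of the corner fRf. Then r can be written as a sum of max(m1, m2) + 1 commutators of elements of R. -/
/-- `a` is a sum of `k` additive commutators `x*y - y*x` of elements of the ring. -/
def IsSumOfNCommutators {A : Type*} [Ring A] (k : ℕ) (a : A) : Prop :=
  ∃ x y : Fin k → A, a = ∑ i, (x i * y i - y i * x i)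

/-- A sum of `m` corner commutators can be padded to `M ≥ m` corner commutators. -/
theorem pad_corner {R : Type*} [Ring R] (e s : R) (m M : ℕ) (h : m ≤ M)
    (h1 : ∃ x y : Fin m → R, s =
      ∑ i, ((e * x i * e) * (e * y i * e) - (e * y i * e) * (e * x i * e))) :
    ∃ x y : Fin M → R, s =
      ∑ i, ((e * x i * e) * (e * y i * e) - (e * y i * e) * (e * x i * e)) := by
  induction M, h using Nat.le_induction with
  | base => exact h1
  | succ n _ ih =>
    obtain ⟨x, y, hxy⟩ := ih
    refine ⟨Fin.snoc (α := fun _ => R) x 0, Fin.snoc (α := fun _ => R) y 0, ?_⟩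
    rw [Fin.sum_univ_castSucc]
    simp [hxy]

/-- If `e` is an idempotent, `f = 1 - e`, `ere` is a sum of `m1` commutators in the corner
`eRe` and `frf` is a sum of `m2` commutators in the corner `fRf`, then `r` is a sum of
`max m1 m2 + 1` commutators in `R`. -/
theorem stmt_3 {R : Type*} [Ring R] (r e : R) (he : e * e = e) (f : R) (hf : f = 1 - e)
    (m1 m2 : ℕ)
    (h1 : ∃ x y : Fin m1 → R, e * r * e =
      ∑ i, ((e * x i * e) * (e * y i * e) - (e * y i * e) * (e * x i * e)))
    (h2 : ∃ x y : Fin m2 → R, f * r * f =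
      ∑ i, ((f * x i * f) * (f * y i * f) - (f * y i * f) * (f * x i * f))) :
    IsSumOfNCommutators (max m1 m2 + 1) r := by
  obtain ⟨x, y, hxy⟩ := pad_corner e _ m1 (max m1 m2) (le_max_left _ _) h1
  obtain ⟨z, w, hzw⟩ := pad_corner f _ m2 (max m1 m2) (le_max_right _ _) h2
  have hef : e * f = 0 := by rw [hf, mul_sub, he]; simp
  have hfe : f * e = 0 := by rw [hf, sub_mul, he]; simp
  have key : ∀ a b c d : R, (e * a * e + f * b * f) * (e * c * e + f * d * f)
      = (e * a * e) * (e * c * e) + (f * b * f) * (f * d * f) := by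
    intro a b c d
    have k1 : (e * a * e) * (f * d * f) = 0 := by
      rw [show (e * a * e) * (f * d * f) = e * a * (e * f) * (d * f) by noncomm_ring, hef]; simp
    have k2 : (f * b * f) * (e * c * e) = 0 := by
      rw [show (f * b * f) * (e * c * e) = f * b * (f * e) * (c * e) by noncomm_ring, hfe]; simp
    rw [add_mul, mul_add, mul_add, k1, k2]; simp
  refine ⟨Fin.snoc (α := fun _ => R) (fun i => e * x i * e + f * z i * f) e,
    Fin.snoc (α := fun _ => R) (fun i => e * y i * e + f * w i * f) (e * r * f - f * r * e), ?_⟩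
  rw [Fin.sum_univ_castSucc]
  simp only [Fin.snoc_castSucc, Fin.snoc_last, key]
  have hs : ∑ i, ((e * x i * e) * (e * y i * e) + (f * z i * f) * (f * w i * f)
      - ((e * y i * e) * (e * x i * e) + (f * w i * f) * (f * z i * f)))
      = e * r * e + f * r * f := by
    rw [hxy, hzw, ← Finset.sum_add_distrib]
    exact Finset.sum_congr rfl fun i _ => by abel
  have hl : e * (e * r * f - f * r * e) - (e * r * f - f * r * e) * e
      = e * r * f + f * r * e := by
    rw [show e * (e * r * f - f * r * e) - (e * r * f - f * r * e) * e
      = (e * e) * r * f - (e * f) * r * e - e * r * (f * e) + f * r * (e * e) by noncomm_ring,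
      he, hef, hfe]
    simp
  rw [hs, hl, hf]
  noncomm_ring
end

section
/- Let R be a ring, r an element of R, n a positive integer, and m_1, ..., m_n natural numbers. Suppose e_1, ..., e_n are pairwise orthogonal idempotents of R with e_1 + e_2 + ... + e_n = 1, and for each i the element e_i r e_i can be written as a sum of m_i commutators [e_i x e_i, e_i y e_i] of elements of the corner ring e_i R e_i. Then r can be written as a sum of max(m_1, ..., m_n) + n - 1 commutators of elements of R. -/
theorem aux_add {R : Type*} [Ring R] {k l : ℕ} {a b : R} (ha : IsSumOfNCommutators k a)
    (hb : IsSumOfNCommutators l b) : IsSumOfNCommutators (k + l) (a + b) := by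
  obtain ⟨x, y, rfl⟩ := ha
  obtain ⟨z, w, rfl⟩ := hb
  refine ⟨Fin.append x z, Fin.append y w, ?_⟩
  simp [Fin.sum_univ_add]
  abel

theorem aux_ext {R : Type*} [Ring R] (m M : ℕ) (hm : m ≤ M) (e a : R)
    (h : ∃ x y : Fin m → R, a =
      ∑ j, ((e * x j * e) * (e * y j * e) - (e * y j * e) * (e * x j * e))) :
    ∃ x y : Fin M → R, a =
      ∑ j, ((e * x j * e) * (e * y j * e) - (e * y j * e) * (e * x j * e)) := by
  obtain ⟨d, rfl⟩ := Nat.exists_eq_add_of_le hm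
  obtain ⟨x, y, rfl⟩ := h
  refine ⟨Fin.append x 0, Fin.append y 0, ?_⟩
  simp [Fin.sum_univ_add]

theorem aux_split {R : Type*} [AddCommGroup R] (n : ℕ) (a : Fin n → Fin n → R) :
    ∑ i, ∑ j, a i j = ∑ i, a i i + ∑ i, ∑ j, (if i < j then a i j + a j i else 0) := by
  have h1 : ∑ i, ∑ j, (if i < j then a j i else 0) = ∑ i, ∑ j, (if j < i then a i j else 0) :=
    Finset.sum_comm
  have h2 : ∑ i, a i i = ∑ i, ∑ j, (if i = j then a i j else 0) := by simp
  have h3 : ∑ i, ∑ j, (if i < j then a i j + a j i else 0)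
      = ∑ i, ∑ j, (if i < j then a i j else 0) + ∑ i, ∑ j, (if i < j then a j i else 0) := by
    simp only [← Finset.sum_add_distrib]
    refine Finset.sum_congr rfl fun i _ => Finset.sum_congr rfl fun j _ => ?_
    split_ifs <;> simp
  rw [h3, h1, h2]
  simp only [← Finset.sum_add_distrib]
  refine Finset.sum_congr rfl fun i _ => Finset.sum_congr rfl fun j _ => ?_
  rcases lt_trichotomy i j with hh | hh | hh
  · simp [hh, hh.ne, hh.not_gt]
  · simp [hh]
  · simp [hh, hh.ne', hh.not_gt]

theorem aux_mul {R : Type*} [Ring R] {n : ℕ} (e x y : Fin n → R)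
    (horth : ∀ i j, i ≠ j → e i * e j = 0) :
    (∑ i, e i * x i * e i) * (∑ i, e i * y i * e i)
      = ∑ i, (e i * x i * e i) * (e i * y i * e i) := by
  rw [Finset.sum_mul]
  refine Finset.sum_congr rfl fun i _ => ?_
  rw [Finset.mul_sum]
  refine Finset.sum_eq_single i (fun j _ hj => ?_) (by simp)
  have : e i * x i * e i * (e j * y j * e j) = e i * x i * (e i * e j) * y j * e j := by
    noncomm_ring
  rw [this, horth i j hj.symm]; simp

theorem aux_comm {R : Type*} [Ring R] (e f r : R) (he : e * e = e) (hef : e * f = 0)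
    (hfe : f * e = 0) :
    e * r * f + f * r * e = e * (e * r * f - f * r * e) - (e * r * f - f * r * e) * e := by
  have h1 : e * (e * r * f - f * r * e) = (e * e) * r * f - (e * f) * r * e := by noncomm_ring
  have h2 : (e * r * f - f * r * e) * e = e * r * (f * e) - f * r * (e * e) := by noncomm_ring
  rw [h1, h2, he, hef, hfe]; simp

/-- If `e 1, ..., e n` are orthogonal idempotents summing to `1` and each `e i * r * e i`
is a sum of `m i` commutators in the corner `e i * R * e i`, then `r` is a sum of
`max (m 1, ..., m n) + n - 1` commutators in `R`. -/
theorem stmt_4 {R : Type*} [Ring R] (r : R) (n : ℕ) (hn : 0 < n)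
    (e : Fin n → R) (m : Fin n → ℕ)
    (hidem : ∀ i, e i * e i = e i)
    (horth : ∀ i j, i ≠ j → e i * e j = 0)
    (hsum : ∑ i, e i = 1)
    (h : ∀ i, ∃ x y : Fin (m i) → R, e i * r * e i =
      ∑ j, ((e i * x j * e i) * (e i * y j * e i) - (e i * y j * e i) * (e i * x j * e i))) :
    IsSumOfNCommutators (Finset.univ.sup m + n - 1) r := by
  obtain ⟨N, rfl⟩ : ∃ N, n = N + 1 := ⟨n - 1, by omega⟩
  have hk : Finset.univ.sup m + (N + 1) - 1 = Finset.univ.sup m + N := by omega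
  rw [hk]
  have hr : r = ∑ i, ∑ j, e i * r * e j := by
    have : r = (∑ i, e i) * r * (∑ j, e j) := by rw [hsum]; simp
    conv_lhs => rw [this]
    simp only [Finset.sum_mul, Finset.mul_sum]
    exact Finset.sum_comm
  rw [aux_split] at hr
  rw [hr]
  apply aux_add
  · have h' := fun i => aux_ext (m i) (Finset.univ.sup m) (Finset.le_sup (Finset.mem_univ i))
      (e i) _ (h i)
    choose x y hxy using h'
    refine ⟨fun j => ∑ i, e i * x i j * e i, fun j => ∑ i, e i * y i j * e i, ?_⟩
    rw [Finset.sum_congr rfl fun i _ => hxy i, Finset.sum_comm]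
    refine Finset.sum_congr rfl fun j _ => ?_
    rw [aux_mul e (fun i => x i j) (fun i => y i j) horth,
      aux_mul e (fun i => y i j) (fun i => x i j) horth, Finset.sum_sub_distrib]
  · rw [Fin.sum_univ_castSucc]
    have hl : ∑ j, (if Fin.last N < j then e (Fin.last N) * r * e j + e j * r * e (Fin.last N)
        else 0) = 0 :=
      Finset.sum_eq_zero fun j _ => if_neg (Fin.le_last j).not_gt
    rw [hl, add_zero]
    let f : Fin (N + 1) → R := fun i => ∑ j, if i < j then e j else 0
    have hef : ∀ i, e i * f i = 0 := fun i => by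
      simp only [f, Finset.mul_sum]
      refine Finset.sum_eq_zero fun j _ => ?_
      split_ifs with hh
      · exact horth i j hh.ne
      · simp
    have hfe : ∀ i, f i * e i = 0 := fun i => by
      simp only [f, Finset.sum_mul]
      refine Finset.sum_eq_zero fun j _ => ?_
      split_ifs with hh
      · exact horth j i hh.ne'
      · simp
    refine ⟨fun k => e k.castSucc, fun k => e k.castSucc * r * f k.castSucc
      - f k.castSucc * r * e k.castSucc, ?_⟩
    refine Finset.sum_congr rfl fun k _ => ?_
    rw [← aux_comm _ _ r (hidem _) (hef _) (hfe _)]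
    simp only [f, Finset.mul_sum, Finset.sum_mul, ← Finset.sum_add_distrib]
    refine Finset.sum_congr rfl fun j _ => ?_
    split_ifs <;> simp
end

section
/- Let R be a ring, n a positive integer, and let M_1, ..., M_n be right R-modules with M = M_1 ⊕ M_2 ⊕ ... ⊕ M_n. If for each i there is a positive integer m_i such that every element of End_R(M_i) is a sum of m_i commutators in End_R(M_i), then every element of End_R(M) is a sum of max(m_1, ..., m_n) + n - 1 commutators in End_R(M). In particular, if each End_R(M_i) is a commutator ring, then so is End_R(M). -/
theorem isSumN_add {A : Type*} [Ring A] {k l : ℕ} {a b : A} (ha : IsSumOfNCommutators k a)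
    (hb : IsSumOfNCommutators l b) : IsSumOfNCommutators (k + l) (a + b) := by
  obtain ⟨x, y, rfl⟩ := ha
  obtain ⟨z, w, rfl⟩ := hb
  refine ⟨Fin.append x z, Fin.append y w, ?_⟩
  simp only [Fin.sum_univ_add, Fin.append_left, Fin.append_right]

theorem isSumN_zero {A : Type*} [Ring A] (k : ℕ) : IsSumOfNCommutators k (0 : A) :=
  ⟨0, 0, by simp⟩

theorem isSumN_mono {A : Type*} [Ring A] {k l : ℕ} (h : k ≤ l) {a : A}
    (ha : IsSumOfNCommutators k a) : IsSumOfNCommutators l a := by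
  obtain ⟨c, rfl⟩ := Nat.exists_eq_add_of_le h
  simpa using isSumN_add ha (isSumN_zero c)

theorem isSumN_offdiag {A : Type*} [Ring A] (m : ℕ) (e : Fin (m + 1) → A)
    (he : ∀ i j, e i * e j = if i = j then e i else 0) (h1 : ∑ i, e i = 1) (p : A) :
    IsSumOfNCommutators m (p - ∑ i, e i * p * e i) := by
  let X : Fin (m + 1) → A := fun k => ∑ l, if k < l then e k * p * e l - e l * p * e k else 0
  have hX : ∀ k, e k * X k - X k * e k
      = ∑ l, if k < l then e k * p * e l + e l * p * e k else 0 := by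
    intro k
    simp only [X, Finset.mul_sum, Finset.sum_mul]
    rw [← Finset.sum_sub_distrib]
    refine Finset.sum_congr rfl fun l _ => ?_
    split_ifs with h
    · have a1 : e k * (e k * p * e l) = e k * p * e l := by
        rw [← mul_assoc, ← mul_assoc, he, if_pos rfl]
      have a2 : e k * (e l * p * e k) = 0 := by
        rw [← mul_assoc, ← mul_assoc, he, if_neg h.ne, zero_mul, zero_mul]
      have a3 : e k * p * e l * e k = 0 := by
        rw [mul_assoc, he, if_neg h.ne', mul_zero]
      have a4 : e l * p * e k * e k = e l * p * e k := by
        rw [mul_assoc, he, if_pos rfl]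
      rw [mul_sub, sub_mul, a1, a2, a3, a4]; abel
    · simp
  have hlast : X (Fin.last m) = 0 := by
    refine Finset.sum_eq_zero fun l _ => ?_
    rw [if_neg (Fin.le_last l).not_gt]
  refine ⟨fun k => e k.castSucc, fun k => X k.castSucc, ?_⟩
  have hs : ∑ k, (e k * X k - X k * e k)
      = ∑ k : Fin m, (e k.castSucc * X k.castSucc - X k.castSucc * e k.castSucc) := by
    rw [Fin.sum_univ_castSucc, hlast]; simp
  rw [← hs]
  have hp : p = ∑ k, ∑ l, e k * p * e l := by
    calc p = (∑ k, e k) * p * (∑ l, e l) := by rw [h1]; simp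
      _ = _ := by simp only [Finset.sum_mul, Finset.mul_sum]; rw [Finset.sum_comm]
  have h2 : ∑ k, (e k * X k - X k * e k)
      = ∑ k, ∑ l, ((if k < l then e k * p * e l else 0) + if l < k then e k * p * e l else 0) := by
    simp only [Finset.sum_add_distrib]
    rw [Finset.sum_comm (f := fun k l => if l < k then e k * p * e l else 0),
      ← Finset.sum_add_distrib]
    refine Finset.sum_congr rfl fun k _ => ?_
    rw [hX, ← Finset.sum_add_distrib]
    refine Finset.sum_congr rfl fun l _ => ?_
    split_ifs <;> simp
  have h3 : ∑ i, e i * p * e i = ∑ k, ∑ l, if k = l then e k * p * e l else 0 := by simp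
  rw [h2, sub_eq_iff_eq_add, h3, ← Finset.sum_add_distrib]
  conv_lhs => rw [hp]
  refine Finset.sum_congr rfl fun k _ => ?_
  rw [← Finset.sum_add_distrib]
  refine Finset.sum_congr rfl fun l _ => ?_
  rcases lt_trichotomy k l with h | h | h
  · simp [h, h.not_gt, h.ne]
  · simp [h]
  · simp [h, h.not_gt, h.ne']

theorem isSumN_diag {S : Type*} [Ring S] {n : ℕ} (M : Fin n → Type*)
    [∀ i, AddCommGroup (M i)] [∀ i, Module S (M i)] (k : ℕ) (f : ∀ i, Module.End S (M i))
    (hf : ∀ i, IsSumOfNCommutators k (f i)) :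
    IsSumOfNCommutators k
      (DirectSum.lmap f : Module.End S (DirectSum (Fin n) M)) := by
  choose x y h using hf
  refine ⟨fun j => DirectSum.lmap fun i => x i j, fun j => DirectSum.lmap fun i => y i j, ?_⟩
  refine LinearMap.ext fun v => DFinsupp.ext fun i => ?_
  have key : ∀ (g : ∀ i, Module.End S (M i)) (v : DirectSum (Fin n) M),
      (DirectSum.lmap g v : DirectSum (Fin n) M) i = g i (v i) := fun g v => by
    simp [DirectSum.lmap_apply]
  rw [key, h i]
  simp only [LinearMap.sum_apply, DirectSum.sum_apply, LinearMap.sub_apply, DirectSum.sub_apply,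
    Module.End.mul_apply, key]

theorem isSumN_main {S : Type*} [Ring S] (n : ℕ) (hn : 0 < n) (M : Fin n → Type*)
    [∀ i, AddCommGroup (M i)] [∀ i, Module S (M i)] (m : Fin n → ℕ)
    (p : Module.End S (DirectSum (Fin n) M))
    (hm : ∀ i, IsSumOfNCommutators (m i)
      (DirectSum.component S (Fin n) M i ∘ₗ p ∘ₗ DirectSum.lof S (Fin n) M i :
        Module.End S (M i))) :
    IsSumOfNCommutators (Finset.univ.sup m + n - 1) p := by
  obtain ⟨c, rfl⟩ : ∃ c, n = c + 1 := ⟨n - 1, by omega⟩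
  let e : Fin (c + 1) → Module.End S (DirectSum (Fin (c + 1)) M) := fun i =>
    DirectSum.lof S (Fin (c + 1)) M i ∘ₗ DirectSum.component S (Fin (c + 1)) M i
  have hd := isSumN_diag M (Finset.univ.sup m) _
    fun i => isSumN_mono (Finset.le_sup (Finset.mem_univ i)) (hm i)
  have he : ∀ i j, e i * e j = if i = j then e i else 0 := by
    intro i j
    refine LinearMap.ext fun v => ?_
    split_ifs with h
    · subst h
      simp [e, DirectSum.component.lof_self]
    · simp [e, DirectSum.component.of, Ne.symm h]
  have hsum : ∀ v : DirectSum (Fin (c + 1)) M,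
      ∑ i, DirectSum.lof S (Fin (c + 1)) M i (v i) = v := fun v => by
    refine DFinsupp.ext fun j => ?_
    rw [DirectSum.sum_apply, Finset.sum_eq_single j]
    · exact DirectSum.of_eq_same j (v j)
    · intro b _ hb
      exact DirectSum.of_eq_of_ne _ _ _ hb.symm
    · simp
  have h1 : ∑ i, e i = 1 := by
    refine LinearMap.ext fun v => ?_
    rw [LinearMap.sum_apply]
    exact hsum v
  have ho := isSumN_offdiag c e he h1 p
  have hD : (∑ i, e i * p * e i) = (DirectSum.lmap (fun i =>
      (DirectSum.component S (Fin (c + 1)) M i ∘ₗ p ∘ₗ DirectSum.lof S (Fin (c + 1)) M i :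
        Module.End S (M i))) : Module.End S (DirectSum (Fin (c + 1)) M)) := by
    refine LinearMap.ext fun v => ?_
    rw [LinearMap.sum_apply]
    refine Eq.trans ?_ (hsum _)
    refine Finset.sum_congr rfl fun i _ => ?_
    simp [e, DirectSum.lmap_apply, DirectSum.component]
    rfl
  have := isSumN_add hd ho
  rw [hD] at this
  simpa using this

/-- Let `M = M 1 ⊕ ... ⊕ M n` be right `R`-modules. If every element of `End (M i)` is a
sum of `m i` commutators (with each `m i` positive), then every element of `End M` is a sum
of `max (m 1, ..., m n) + n - 1` commutators; in particular if each `End (M i)` is a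
commutator ring then so is `End M`. -/
theorem stmt_5 {R : Type*} [Ring R] (n : ℕ) (hn : 0 < n)
    (M : Fin n → Type*) [∀ i, AddCommGroup (M i)] [∀ i, Module Rᵐᵒᵖ (M i)] :
    (∀ m : Fin n → ℕ, (∀ i, 0 < m i) →
      (∀ i, ∀ φ : Module.End Rᵐᵒᵖ (M i), IsSumOfNCommutators (m i) φ) →
      ∀ ψ : Module.End Rᵐᵒᵖ (DirectSum (Fin n) M),
        IsSumOfNCommutators (Finset.univ.sup m + n - 1) ψ) ∧
    ((∀ i, ∀ φ : Module.End Rᵐᵒᵖ (M i), IsSumOfCommutators φ) →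
      ∀ ψ : Module.End Rᵐᵒᵖ (DirectSum (Fin n) M), IsSumOfCommutators ψ) := by
  refine ⟨fun m _ h p => isSumN_main n hn M m p fun i => h i _, fun h p => ?_⟩
  choose m hm using fun i => h i
    (DirectSum.component Rᵐᵒᵖ (Fin n) M i ∘ₗ p ∘ₗ DirectSum.lof Rᵐᵒᵖ (Fin n) M i)
  exact ⟨_, isSumN_main n hn M m p hm⟩
end

section
/- Let R be a ring, N a right R-module, Ω an infinite set, and M = ⨁_{i ∈ Ω} N the direct sum of copies of N indexed by Ω. Then there exists an endomorphism x in End_R(M) such that every element f of End_R(M) can be written as a single commutator f = [x, y] = xy - yx for some y in End_R(M). -/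
/-- The columns of the solution `y` of `x * y - y * x = f`, defined recursively. -/
noncomputable def colAux {S N M Ω : Type*} [Ring S] [AddCommGroup N] [Module S N]
    [AddCommGroup M] [Module S M] (z : Module.End S M) (F : Ω → ℕ → (N →ₗ[S] M)) (a : Ω) :
    ℕ → (N →ₗ[S] M)
  | 0 => z ∘ₗ F a 0
  | n + 1 => z ∘ₗ (F a (n + 1) + colAux z F a n)

/-- Abstract version: `M` has columns `L a n` out of which maps can be freely prescribed. -/
theorem commAux {S N M Ω : Type*} [Ring S] [AddCommGroup N] [Module S N]
    [AddCommGroup M] [Module S M] (L : Ω → ℕ → (N →ₗ[S] M))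
    (T : (Ω → ℕ → (N →ₗ[S] M)) → Module.End S M)
    (hT : ∀ G a n v, T G (L a n v) = G a n v)
    (hext : ∀ u w : Module.End S M, (∀ a n v, u (L a n v) = w (L a n v)) → u = w) :
    ∃ x : Module.End S M, ∀ f : Module.End S M, ∃ y, f = x * y - y * x := by
  let x : Module.End S M := T (fun a n => Nat.casesOn n 0 (fun k => L a k))
  let z : Module.End S M := T (fun a n => L a (n + 1))
  have hx0 : ∀ a v, x (L a 0 v) = 0 := fun a v => hT _ a 0 v
  have hx1 : ∀ a n v, x (L a (n + 1) v) = L a n v := fun a n v => hT _ a (n + 1) v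
  have hz : ∀ a n v, z (L a n v) = L a (n + 1) v := fun a n v => hT _ a n v
  have hxz : ∀ m, x (z m) = m := by
    have : x * z = 1 := hext _ _ fun a n v => by
      rw [Module.End.mul_apply, hz, hx1, Module.End.one_apply]
    exact fun m => LinearMap.congr_fun this m
  refine ⟨x, fun f => ⟨T (colAux z (fun a n => f ∘ₗ L a n)), ?_⟩⟩
  refine hext _ _ fun a n v => ?_
  rw [LinearMap.sub_apply, Module.End.mul_apply, Module.End.mul_apply, hT]
  cases n with
  | zero =>
    rw [hx0, map_zero, sub_zero]
    exact (hxz _).symm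
  | succ n =>
    rw [hx1, hT, eq_sub_iff_add_eq]
    exact (hxz _).symm

/-- For an infinite set `Ω` and a right `R`-module `N`, there is an endomorphism `x` of
`M = ⨁_{i ∈ Ω} N` such that every endomorphism of `M` is a single commutator `[x, y]`. -/
theorem stmt_6 {R : Type*} [Ring R] (N : Type*) [AddCommGroup N] [Module Rᵐᵒᵖ N]
    (Ω : Type*) [Infinite Ω] :
    ∃ x : Module.End Rᵐᵒᵖ (DirectSum Ω fun _ : Ω => N),
      ∀ f : Module.End Rᵐᵒᵖ (DirectSum Ω fun _ : Ω => N),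
        ∃ y, f = x * y - y * x := by
  classical
  have he : Nonempty (Ω ≃ Ω × ℕ) := by
    rw [← Cardinal.eq]
    simp [Cardinal.mul_aleph0_eq]
  obtain ⟨e⟩ := he
  refine commAux (N := N) (Ω := Ω)
    (fun a n => DirectSum.lof Rᵐᵒᵖ Ω (fun _ => N) (e.symm (a, n)))
    (fun G => DirectSum.toModule Rᵐᵒᵖ Ω _ (fun i => G (e i).1 (e i).2)) ?_ ?_
  · intro G a n v
    rw [DirectSum.toModule_lof, Equiv.apply_symm_apply]
  · intro u w h
    refine DirectSum.linearMap_ext _ fun i => LinearMap.ext fun v => ?_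
    have := h (e i).1 (e i).2 v
    rw [Prod.mk.eta, Equiv.symm_apply_apply] at this
    exact this
end

section
/- Let R be a ring, N a right R-module, Ω an infinite set, and M = ∏_{i ∈ Ω} N the direct product of copies of N indexed by Ω. Then there exists an endomorphism x in End_R(M) such that every element f of End_R(M) can be written as a single commutator f = [x, y] = xy - yx for some y in End_R(M). -/
/-- For an infinite set `Ω` and a right `R`-module `N`, there is an endomorphism `x` of
`M = ∏_{i ∈ Ω} N` such that every endomorphism of `M` is a single commutator `[x, y]`. -/
theorem stmt_7 {R : Type*} [Ring R] (N : Type*) [AddCommGroup N] [Module Rᵐᵒᵖ N]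
    (Ω : Type*) [Infinite Ω] :
    ∃ x : Module.End Rᵐᵒᵖ (Ω → N),
      ∀ f : Module.End Rᵐᵒᵖ (Ω → N),
        ∃ y, f = x * y - y * x := by
  have he : Nonempty (Ω ≃ ℕ × Ω) := by
    apply Cardinal.eq.1 ?_ |>.map id
    rw [Cardinal.mk_prod, Cardinal.mk_nat, Cardinal.lift_aleph0, Cardinal.lift_uzero,
      Cardinal.aleph0_mul_eq (Cardinal.aleph0_le_mk Ω)]
  obtain ⟨e⟩ := he
  let σ : Ω → Ω := fun w => e.symm ((e w).1 + 1, (e w).2)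
  let L : Module.End Rᵐᵒᵖ (Ω → N) := LinearMap.funLeft Rᵐᵒᵖ N σ
  refine ⟨L, fun f => ?_⟩
  let Y : ℕ → Ω → ((Ω → N) →ₗ[Rᵐᵒᵖ] N) := fun n w =>
    Nat.rec 0 (fun k g => (LinearMap.proj (e.symm (k, w))).comp f + g.comp L) n
  refine ⟨LinearMap.pi fun w => Y (e w).1 (e w).2, ?_⟩
  have hY : ∀ n w, Y (n + 1) w = (LinearMap.proj (e.symm (n, w))).comp f + (Y n w).comp L :=
    fun _ _ => rfl
  apply LinearMap.ext
  intro m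
  funext w
  have h1 : (L * LinearMap.pi fun w => Y (e w).1 (e w).2) m w = Y ((e w).1 + 1) (e w).2 m := by
    change Y (e (σ w)).1 (e (σ w)).2 m = _
    simp [σ]
  have h2 : ((LinearMap.pi fun w => Y (e w).1 (e w).2) * L) m w = Y (e w).1 (e w).2 (L m) := rfl
  rw [LinearMap.sub_apply, Pi.sub_apply, h1, h2, hY]
  simp
end

section
/- Let R be a ring and M a right R-module. The following are equivalent: (1) there exists a right R-module N such that M is isomorphic to the direct sum ⨁_{i ∈ ℕ} N of countably infinitely many copies of N; (2) there exist endomorphisms x, z in End_R(M) such that z ∘ x is the identity on M and every element of M is annihilated by some power of z (i.e., the union over i ≥ 1 of the kernels of z^i is all of M). -/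
universe u v

theorem fwd_aux {S : Type u} [Ring S] {N : Type v} [AddCommGroup N] [Module S N] :
    ∃ x z : Module.End S (ℕ →₀ N), z * x = 1 ∧ ∀ m, ∃ i : ℕ, 1 ≤ i ∧ (z ^ i) m = 0 := by
  refine ⟨Finsupp.lmapDomain N S Nat.succ,
    Finsupp.lcomapDomain Nat.succ Nat.succ_injective, ?_, ?_⟩
  · refine LinearMap.ext fun f => Finsupp.ext fun j => ?_
    exact Finsupp.mapDomain_apply Nat.succ_injective f j
  · intro m
    have key : ∀ (i : ℕ) (f : ℕ →₀ N) (j : ℕ),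
        (((Finsupp.lcomapDomain Nat.succ Nat.succ_injective : (ℕ →₀ N) →ₗ[S] (ℕ →₀ N)) :
          Module.End S (ℕ →₀ N)) ^ i) f j = f (j + i) := by
      intro i
      induction i with
      | zero => intro f j; simp
      | succ i ih =>
        intro f j
        rw [pow_succ, Module.End.mul_apply, ih]
        rfl
    refine ⟨m.support.sup id + 1, by omega, Finsupp.ext fun j => ?_⟩
    rw [key]
    by_contra h
    have := Finset.le_sup (f := id) (Finsupp.mem_support_iff.mpr h)
    simp only [id] at this
    omega

theorem bwd_aux {S : Type u} [Ring S] {M : Type v} [AddCommGroup M] [Module S M]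
    (x z : Module.End S M) (h : z * x = 1) (hz : ∀ m : M, ∃ i : ℕ, 1 ≤ i ∧ (z ^ i) m = 0) :
    Nonempty (M ≃ₗ[S] (ℕ →₀ LinearMap.ker z)) := by
  have hzx : ∀ m, z (x m) = m := fun m => LinearMap.congr_fun h m
  let Φ : (ℕ →₀ LinearMap.ker z) →ₗ[S] M :=
    Finsupp.lsum ℕ fun i => (x ^ i) ∘ₗ (LinearMap.ker z).subtype
  have hΦ : ∀ i n, Φ (Finsupp.single i n) = (x ^ i) n.1 := by
    intro i n; simp [Φ]
  have hx : ∀ f, ∃ g, Φ g = x (Φ f) := by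
    intro f
    induction f using Finsupp.induction_linear with
    | zero => exact ⟨0, by simp⟩
    | add f g hf hg =>
      obtain ⟨a, ha⟩ := hf
      obtain ⟨b, hb⟩ := hg
      exact ⟨a + b, by simp [ha, hb]⟩
    | single i n => exact ⟨Finsupp.single (i + 1) n, by rw [hΦ, hΦ, pow_succ']; rfl⟩
  have hsurj : Function.Surjective Φ := by
    have : ∀ (i : ℕ) (m : M), (z ^ i) m = 0 → ∃ f, Φ f = m := by
      intro i
      induction i with
      | zero => intro m hm; exact ⟨0, by simpa using hm.symm⟩
      | succ i ih =>
        intro m hm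
        obtain ⟨f, hf⟩ := ih (z m) (by rw [pow_succ] at hm; exact hm)
        obtain ⟨g, hg⟩ := hx f
        refine ⟨g + Finsupp.single 0 ⟨m - x (z m), by simp [hzx]⟩, ?_⟩
        rw [map_add, hΦ, hg, hf]
        simp
    intro m
    obtain ⟨i, _, hi⟩ := hz m
    exact this i m hi
  have hc : ∀ (j : ℕ) f, (1 - x * z) ((z ^ j) (Φ f)) = (f j).1 := by
    have base : ∀ (j i : ℕ) (n : LinearMap.ker z),
        (1 - x * z) ((z ^ j) ((x ^ i) n.1)) = ((Finsupp.single i n : ℕ →₀ _) j).1 := by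
      intro j
      induction j with
      | zero =>
        intro i n
        cases i with
        | zero => simp
        | succ i => simp [pow_succ', hzx]
      | succ j ih =>
        intro i n
        cases i with
        | zero =>
          have : z n.1 = 0 := n.2
          simp [pow_succ, this]
        | succ i =>
          have := ih i n
          rw [pow_succ, pow_succ', Module.End.mul_apply, Module.End.mul_apply, hzx, this]
          simp [Finsupp.single_apply]
    intro j f
    induction f using Finsupp.induction_linear with
    | zero => simp
    | add f g hf hg => rw [map_add, map_add, map_add, hf, hg]; rfl
    | single i n => rw [hΦ, base]
  have hinj : Function.Injective Φ := by
    intro f g hfg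
    refine Finsupp.ext fun j => Subtype.ext ?_
    rw [← hc, ← hc, hfg]
  exact ⟨(LinearEquiv.ofBijective Φ ⟨hinj, hsurj⟩).symm⟩

/-- A right `R`-module `M` is isomorphic to a direct sum of countably infinitely many copies
of some module `N` if and only if there are endomorphisms `x, z` of `M` with `z ∘ x = id`
and `⋃_{i ≥ 1} ker (z^i) = M`. -/
theorem stmt_10 {R : Type u} [Ring R] {M : Type v} [AddCommGroup M] [Module Rᵐᵒᵖ M] :
    (∃ (N : Type v) (_ : AddCommGroup N) (_ : Module Rᵐᵒᵖ N),
      Nonempty (M ≃ₗ[Rᵐᵒᵖ] DirectSum ℕ fun _ : ℕ => N)) ↔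
    (∃ x z : Module.End Rᵐᵒᵖ M, z * x = 1 ∧ ∀ m : M, ∃ i : ℕ, 1 ≤ i ∧ (z ^ i) m = 0) := by
  classical
  constructor
  · rintro ⟨N, _, _, ⟨e₀⟩⟩
    obtain ⟨x, z, h, hz⟩ := fwd_aux (S := Rᵐᵒᵖ) (N := N)
    let e : M ≃ₗ[Rᵐᵒᵖ] (ℕ →₀ N) := e₀.trans (finsuppLEquivDirectSum Rᵐᵒᵖ N ℕ).symm
    have hzx : ∀ m, z (x m) = m := fun m => LinearMap.congr_fun h m
    let X : Module.End Rᵐᵒᵖ M := e.symm.toLinearMap ∘ₗ x ∘ₗ e.toLinearMap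
    let Z : Module.End Rᵐᵒᵖ M := e.symm.toLinearMap ∘ₗ z ∘ₗ e.toLinearMap
    have hZ : ∀ m, Z m = e.symm (z (e m)) := fun _ => rfl
    have hX : ∀ m, X m = e.symm (x (e m)) := fun _ => rfl
    have hp : ∀ (i : ℕ) m, (Z ^ i) m = e.symm ((z ^ i) (e m)) := by
      intro i
      induction i with
      | zero => intro m; simp
      | succ i ih =>
        intro m
        rw [pow_succ, pow_succ, Module.End.mul_apply, Module.End.mul_apply, ih, hZ,
          LinearEquiv.apply_symm_apply]
    refine ⟨X, Z, LinearMap.ext fun m => ?_, fun m => ?_⟩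
    · rw [Module.End.mul_apply, hZ, hX, LinearEquiv.apply_symm_apply, hzx,
        LinearEquiv.symm_apply_apply]
      rfl
    · obtain ⟨i, hi, h0⟩ := hz (e m)
      exact ⟨i, hi, by rw [hp, h0, map_zero]⟩
  · rintro ⟨x, z, h, hz⟩
    obtain ⟨e⟩ := bwd_aux x z h hz
    exact ⟨LinearMap.ker z, inferInstance, inferInstance,
      ⟨e.trans (finsuppLEquivDirectSum Rᵐᵒᵖ (LinearMap.ker z) ℕ)⟩⟩
end

section
/- Let R be a ring and n a positive integer. Let X in M_n(R) be the matrix with entry 1 in each position (i+1, i) for i = 1, ..., n-1 and 0 elsewhere (the shift matrix X = Σ_{i=1}^{n-1} E_{i+1,i}), and let Y = E_{nn} be the matrix with entry 1 in position (n,n) and 0 elsewhere. Then for every matrix A in M_n(R) with trace 0, there exist matrices C, D in M_n(R) such that A = [X, C] + [Y, D]. In particular, every n-by-n matrix over R with trace zero is a sum of two commutators in M_n(R). -/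
/-- Recursive solution of the shift equations. -/
def solC {R : Type*} [Ring R] (a : ℕ → ℕ → R) : ℕ → ℕ → R
  | _, 0 => 0
  | 0, j + 1 => - a 0 j
  | i + 1, j + 1 => solC a i j - a (i + 1) j

theorem solC_diag {R : Type*} [Ring R] (a : ℕ → ℕ → R) (k : ℕ) :
    solC a k (k + 1) = - ∑ l ∈ Finset.range (k + 1), a l l := by
  induction k with
  | zero => simp [solC]
  | succ k ih => rw [solC, ih, Finset.sum_range_succ _ (k + 1)]; abel


/-- With `X = Σ_{i=1}^{n-1} E_{i+1,i}` and `Y = E_{nn}`, every `n×n` matrix `A` over a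
ring `R` with trace `0` can be written as `[X, C] + [Y, D]`; in particular every traceless
matrix is a sum of two commutators. -/
theorem stmt_11 (R : Type*) [Ring R] (n : ℕ) (hn : 0 < n)
    (X Y : Matrix (Fin n) (Fin n) R)
    (hX : X = Matrix.of fun i j : Fin n => if (i : ℕ) = (j : ℕ) + 1 then (1 : R) else 0)
    (hY : Y = Matrix.of fun i j : Fin n =>
      if (i : ℕ) = n - 1 ∧ (j : ℕ) = n - 1 then (1 : R) else 0) :
    ∀ A : Matrix (Fin n) (Fin n) R, Matrix.trace A = 0 →
      ∃ C D : Matrix (Fin n) (Fin n) R,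
        A = (X * C - C * X) + (Y * D - D * Y) := by
  obtain ⟨m, rfl⟩ : ∃ m, n = m + 1 := ⟨n - 1, by omega⟩
  intro A hA
  let a : ℕ → ℕ → R := fun i j =>
    if h : i < m + 1 ∧ j < m + 1 then A ⟨i, h.1⟩ ⟨j, h.2⟩ else 0
  have ha : ∀ i j : Fin (m + 1), a i j = A i j := by
    intro i j
    exact dif_pos ⟨i.2, j.2⟩
  let C : Matrix (Fin (m + 1)) (Fin (m + 1)) R := Matrix.of fun i j => solC a i j
  have hXC : ∀ i j : Fin (m + 1), (X * C) i j = if (i : ℕ) = 0 then 0 else solC a (i - 1) j := by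
    intro i j
    rw [hX, Matrix.mul_apply]
    split_ifs with h
    · apply Finset.sum_eq_zero
      intro k _
      simp [h]
    · rw [Finset.sum_eq_single (⟨i - 1, by omega⟩ : Fin (m + 1))]
      · have : (i : ℕ) = i - 1 + 1 := by omega
        simp [C, ← this]
      · intro k _ hk
        have : ¬ (i : ℕ) = k + 1 := fun h' => hk (by ext; simp; omega)
        simp [this]
      · simp
  have hCX : ∀ i j : Fin (m + 1), (C * X) i j = if (j : ℕ) = m then 0 else solC a i (j + 1) := by
    intro i j
    rw [hX, Matrix.mul_apply]
    split_ifs with h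
    · apply Finset.sum_eq_zero
      intro k _
      have : ¬ (k : ℕ) = j + 1 := by omega
      simp [this]
    · rw [Finset.sum_eq_single (⟨j + 1, by omega⟩ : Fin (m + 1))]
      · simp [C]
      · intro k _ hk
        have : ¬ (k : ℕ) = j + 1 := fun h' => hk (by ext; simp; omega)
        simp [this]
      · simp
  have key : ∀ i j : Fin (m + 1), ((i : ℕ) = m ↔ (j : ℕ) = m) →
      A i j = (X * C) i j - (C * X) i j := by
    intro i j hij
    rw [hXC, hCX, ← ha]
    by_cases hj : (j : ℕ) = m
    · have hi := hij.2 hj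
      have htr : ∑ l ∈ Finset.range (m + 1), a l l = 0 := by
        rw [Finset.sum_range, ← hA]
        exact Finset.sum_congr rfl fun l _ => ha l l
      rw [if_pos hj, hi, hj]
      rw [Finset.sum_range_succ] at htr
      rcases m with _ | m
      · simpa using htr
      · rw [if_neg (by omega), Nat.add_sub_cancel, solC_diag]
        rw [sub_zero]
        exact eq_neg_of_add_eq_zero_right htr
    · rw [if_neg hj]
      rcases hi : (i : ℕ) with _ | k
      · simp [solC]
      · simp [solC]
  let B := A - (X * C - C * X)
  let D : Matrix (Fin (m + 1)) (Fin (m + 1)) R :=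
    Matrix.of fun i j => if (i : ℕ) = m then B i j else - B i j
  have hYs : Y = Matrix.single (Fin.last m) (Fin.last m) 1 := by
    rw [hY]
    ext i j
    simp [Matrix.single_apply, Fin.ext_iff, eq_comm]
  have hYD : ∀ i j : Fin (m + 1), (Y * D) i j = if (i : ℕ) = m then D i j else 0 := by
    intro i j
    rw [hYs]
    split_ifs with h
    · obtain rfl : i = Fin.last m := Fin.ext h
      simp
    · rw [Matrix.single_mul_apply_of_ne]
      exact fun h' => h (by simp [h'])
  have hDY : ∀ i j : Fin (m + 1), (D * Y) i j = if (j : ℕ) = m then D i j else 0 := by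
    intro i j
    rw [hYs]
    split_ifs with h
    · obtain rfl : j = Fin.last m := Fin.ext h
      simp
    · rw [Matrix.mul_single_apply_of_ne]
      exact fun h' => h (by simp [h'])
  refine ⟨C, D, ?_⟩
  ext i j
  rw [Matrix.add_apply, Matrix.sub_apply, Matrix.sub_apply, hYD, hDY]
  by_cases hi : (i : ℕ) = m <;> by_cases hj : (j : ℕ) = m
  · simp [hi, hj, key i j (by simp [hi, hj])]
  · simp [hi, hj, D, B]
  · simp [hi, hj, D, B]
  · simp [hi, hj, key i j (by simp [hi, hj])]
end

section
/- Let R be a ring, n a positive integer, m a natural number, and A a matrix in M_n(R). If the trace of A can be written as a sum of m commutators in R, then A can be written as a sum of ⌈m/n²⌉ + 2 commutators in M_n(R), where ⌈m/n²⌉ denotes the least integer greater than or equal to m/n². -/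
theorem sumComm_succ {A : Type*} [Ring A] {k : ℕ} {a : A} (h : IsSumOfNCommutators k a)
    (u v : A) : IsSumOfNCommutators (k + 1) ((u * v - v * u) + a) := by
  obtain ⟨x, y, rfl⟩ := h
  refine ⟨Fin.cons u x, Fin.cons v y, ?_⟩
  rw [Fin.sum_univ_succ]
  simp only [Fin.cons_zero, Fin.cons_succ]

/-- Partial diagonal sums. -/
def diagSum {R : Type*} [Ring R] (b : ℕ → ℕ → R) : ℕ → ℕ → R
  | 0, j => b 0 j
  | i + 1, 0 => b (i + 1) 0
  | i + 1, j + 1 => b (i + 1) (j + 1) + diagSum b i j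

/-- Shifted partial diagonal sums. -/
def diagShift {R : Type*} [Ring R] (b : ℕ → ℕ → R) : ℕ → ℕ → R
  | 0, _ => 0
  | i + 1, j => diagSum b i j

theorem diagSum_diag {R : Type*} [Ring R] (b : ℕ → ℕ → R) (p : ℕ) :
    diagSum b p p = ∑ i ∈ Finset.range (p + 1), b i i := by
  induction p with
  | zero => simp [diagSum]
  | succ p ih => rw [Finset.sum_range_succ, ← ih, diagSum, add_comm]

theorem trace_zero_two {R : Type*} [Ring R] (p : ℕ) (B : Matrix (Fin (p + 1)) (Fin (p + 1)) R)
    (hB : Matrix.trace B = 0) :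
    ∃ N Y E L : Matrix (Fin (p + 1)) (Fin (p + 1)) R,
      B = (N * Y - Y * N) + (E * L - L * E) := by
  set b : ℕ → ℕ → R := fun i j =>
    if h : i < p + 1 ∧ j < p + 1 then B ⟨i, h.1⟩ ⟨j, h.2⟩ else 0 with hb
  have hbB : ∀ i j : Fin (p + 1), b i j = B i j := by
    intro i j
    exact dif_pos ⟨i.2, j.2⟩
  have htr : diagSum b p p = 0 := by
    rw [diagSum_diag, Finset.sum_range, ← hB]
    simp only [Matrix.trace, Matrix.diag, hbB]
  let N : Matrix (Fin (p + 1)) (Fin (p + 1)) R :=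
    Matrix.of fun i j => if i.1 + 1 = j.1 then 1 else 0
  let Y : Matrix (Fin (p + 1)) (Fin (p + 1)) R := Matrix.of fun i j => diagShift b i j
  let L : Matrix (Fin (p + 1)) (Fin (p + 1)) R :=
    Matrix.of fun i j => if i.1 = p then diagSum b i j else 0
  let E : Matrix (Fin (p + 1)) (Fin (p + 1)) R :=
    Matrix.of fun i j => if i = j then (if j.1 = p then 1 else 0) else 0
  refine ⟨N, Y, E, L, ?_⟩
  have hNY : ∀ i j, (N * Y) i j = if i.1 = p then 0 else diagSum b i j := by
    intro i j
    rw [Matrix.mul_apply]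
    split_ifs with h
    · apply Finset.sum_eq_zero
      intro k _
      have : ¬ (i.1 + 1 = k.1) := by have := k.2; omega
      simp [N, this]
    · have hi : i.1 + 1 < p + 1 := by have := i.2; omega
      rw [Finset.sum_eq_single (⟨i.1 + 1, hi⟩ : Fin (p + 1))]
      · simp [N, Y, diagShift]
      · intro k _ hk
        have : ¬ (i.1 + 1 = k.1) := fun h => hk (Fin.ext h.symm)
        simp [N, this]
      · simp
  have hYN : ∀ i j, (Y * N) i j = if j.1 = 0 then 0 else diagShift b i (j.1 - 1) := by
    intro i j
    rw [Matrix.mul_apply]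
    split_ifs with h
    · apply Finset.sum_eq_zero
      intro k _
      have : ¬ (k.1 + 1 = j.1) := by omega
      simp [N, this]
    · have hj : j.1 - 1 < p + 1 := by have := j.2; omega
      rw [Finset.sum_eq_single (⟨j.1 - 1, hj⟩ : Fin (p + 1))]
      · have : j.1 - 1 + 1 = j.1 := by omega
        simp [N, Y, this]
      · intro k _ hk
        have : ¬ (k.1 + 1 = j.1) := fun h => hk (Fin.ext (by simp; omega))
        simp [N, this]
      · simp
  have hEL : ∀ i j, (E * L) i j = if i.1 = p then diagSum b i j else 0 := by
    intro i j
    rw [Matrix.mul_apply]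
    rw [Finset.sum_eq_single i]
    · by_cases hi : i.1 = p <;> simp [E, L, hi]
    · intro k _ hk
      simp [E, hk.symm]
    · simp
  have hLE : ∀ i j, (L * E) i j = 0 := by
    intro i j
    rw [Matrix.mul_apply]
    apply Finset.sum_eq_zero
    intro k _
    by_cases hi : i.1 = p
    · by_cases hk : k.1 = p
      · simp [L, hi, hk, htr]
      · by_cases hkj : k = j
        · subst hkj
          simp [E, hk]
        · simp [E, hkj]
    · simp [L, hi]
  have key : ∀ i j : ℕ, b i j = diagSum b i j - (if j = 0 then 0 else diagShift b i (j - 1)) := by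
    intro i j
    rcases i with _ | i <;> rcases j with _ | j <;> simp [diagSum, diagShift]
  ext i j
  simp only [Matrix.add_apply, Matrix.sub_apply, hNY, hYN, hEL, hLE]
  rw [← hbB, key]
  by_cases h : i.1 = p
  · simp only [h, if_true]
    abel
  · simp only [h, if_false]
    abel

theorem trace_comm {R : Type*} [Ring R] {n : ℕ} (X Y : Matrix (Fin n) (Fin n) R) :
    Matrix.trace (X * Y - Y * X) = ∑ i, ∑ j, (X i j * Y j i - Y j i * X i j) := by
  simp only [Matrix.trace, Matrix.diag, Matrix.sub_apply, Matrix.mul_apply,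
    Finset.sum_sub_distrib]
  congr 1
  exact Finset.sum_comm

theorem sumComm_pad {R : Type*} [Ring R] {m M : ℕ} (hmM : m ≤ M) {a : R}
    (h : IsSumOfNCommutators m a) : IsSumOfNCommutators M a := by
  induction M, hmM using Nat.le_induction with
  | base => exact h
  | succ M _ ih => simpa using sumComm_succ ih 0 0

/-- If the trace of an `n×n` matrix `A` over `R` is a sum of `m` commutators in `R`, then
`A` is a sum of `⌈m/n²⌉ + 2` commutators in `Mₙ(R)`.  (Here `(m + n^2 - 1) / n^2` is the
least natural number `≥ m / n²`.) -/
theorem stmt_12 {R : Type*} [Ring R] (n : ℕ) (hn : 0 < n) (m : ℕ)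
    (A : Matrix (Fin n) (Fin n) R)
    (h : IsSumOfNCommutators m (Matrix.trace A)) :
    IsSumOfNCommutators ((m + n ^ 2 - 1) / n ^ 2 + 2) A := by
  set k := (m + n ^ 2 - 1) / n ^ 2 with hk
  have hn2 : 0 < n ^ 2 := by positivity
  have hm : m ≤ k * (n * n) := by
    have h1 := Nat.div_add_mod (m + n ^ 2 - 1) (n ^ 2)
    have h2 := Nat.mod_lt (m + n ^ 2 - 1) hn2
    rw [← hk] at h1
    have h3 : k * (n * n) = n ^ 2 * k := by ring
    omega
  obtain ⟨x, y, hxy⟩ := sumComm_pad hm h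
  let e : Fin k → Fin n → Fin n → Fin (k * (n * n)) :=
    fun t i j => finProdFinEquiv (t, finProdFinEquiv (i, j))
  let X : Fin k → Matrix (Fin n) (Fin n) R := fun t => Matrix.of fun i j => x (e t i j)
  let Y : Fin k → Matrix (Fin n) (Fin n) R := fun t => Matrix.of fun j i => y (e t i j)
  have hS : IsSumOfNCommutators k (∑ t, (X t * Y t - Y t * X t)) := ⟨X, Y, rfl⟩
  have htr : Matrix.trace (A - ∑ t, (X t * Y t - Y t * X t)) = 0 := by
    rw [Matrix.trace_sub, Matrix.trace_sum, hxy, sub_eq_zero]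
    simp only [trace_comm]
    rw [← finProdFinEquiv.sum_comp, Fintype.sum_prod_type]
    refine Finset.sum_congr rfl fun t _ => ?_
    rw [← finProdFinEquiv.sum_comp, Fintype.sum_prod_type]
    rfl
  obtain ⟨p, rfl⟩ : ∃ p, n = p + 1 := ⟨n - 1, by omega⟩
  obtain ⟨N, Z, E, L, hB⟩ := trace_zero_two p _ htr
  have := sumComm_succ (sumComm_succ hS E L) N Z
  rw [← add_assoc, ← hB, sub_add_cancel] at this
  exact this
end

section
/- Let F be a field and let A, B be matrices in M_2(F) with AB = BA. Then the set { [A,C] + [B,D] : C, D in M_2(F) }, which is an F-linear subspace of M_2(F) (namely the range of the F-linear map (C,D) ↦ [A,C] + [B,D]), has dimension at most 2 over F. -/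
lemma aux_inj {F : Type*} [Field F] (S : Submodule F (Matrix (Fin 2) (Fin 2) F))
    (i j k l : Fin 2)
    (h : ∀ X ∈ S, X i j = 0 → X k l = 0 → X = 0) : Module.finrank F S ≤ 2 := by
  let f : S →ₗ[F] F × F :=
    ((Matrix.entryLinearMap F F i j).prod (Matrix.entryLinearMap F F k l)).comp S.subtype
  have hf : Function.Injective f := by
    rw [injective_iff_map_eq_zero]
    rintro ⟨X, hX⟩ h0
    have h1 : X i j = 0 := congrArg Prod.fst h0
    have h2 : X k l = 0 := congrArg Prod.snd h0
    exact Subtype.ext (h X hX h1 h2)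
  simpa using LinearMap.finrank_le_finrank_of_injective hf

lemma aux_dim {F : Type*} [Field F] (S : Submodule F (Matrix (Fin 2) (Fin 2) F))
    (p q r : F) (hn : ¬ (p = 0 ∧ q = 0 ∧ r = 0))
    (h : ∀ X ∈ S, X 0 0 + X 1 1 = 0 ∧ p * X 0 0 + q * X 1 0 + r * X 0 1 = 0) :
    Module.finrank F S ≤ 2 := by
  by_cases hp : p = 0
  · by_cases hq : q = 0
    · have hr : r ≠ 0 := fun hr => hn ⟨hp, hq, hr⟩
      refine aux_inj S 0 0 1 0 fun X hX h1 h2 => ?_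
      obtain ⟨h3, h4⟩ := h X hX
      have h5 : X 0 1 = 0 := by simpa [h1, h2, hr] using h4
      have h6 : X 1 1 = 0 := by simpa [h1] using h3
      ext i j; fin_cases i <;> fin_cases j <;> simp [*]
    · refine aux_inj S 0 0 0 1 fun X hX h1 h2 => ?_
      obtain ⟨h3, h4⟩ := h X hX
      have h5 : X 1 0 = 0 := by simpa [h1, h2, hq] using h4
      have h6 : X 1 1 = 0 := by simpa [h1] using h3
      ext i j; fin_cases i <;> fin_cases j <;> simp [*]
  · refine aux_inj S 1 0 0 1 fun X hX h1 h2 => ?_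
    obtain ⟨h3, h4⟩ := h X hX
    have h5 : X 0 0 = 0 := by simpa [h1, h2, hp] using h4
    have h6 : X 1 1 = 0 := by simpa [h5] using h3
    ext i j; fin_cases i <;> fin_cases j <;> simp [*]

/-- If `A, B ∈ M₂(F)` commute, then the set `{[A,C] + [B,D] : C, D ∈ M₂(F)}`, i.e. the
range of the `F`-linear map `(C, D) ↦ [A,C] + [B,D]`, is a subspace of `M₂(F)` of
dimension at most `2`. -/
theorem stmt_14 {F : Type*} [Field F] (A B : Matrix (Fin 2) (Fin 2) F)
    (hAB : A * B = B * A)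
    (φ : (Matrix (Fin 2) (Fin 2) F × Matrix (Fin 2) (Fin 2) F) →ₗ[F]
      Matrix (Fin 2) (Fin 2) F)
    (hφ : φ = (LinearMap.mulLeft F A - LinearMap.mulRight F A).coprod
      (LinearMap.mulLeft F B - LinearMap.mulRight F B)) :
    (LinearMap.range φ : Set (Matrix (Fin 2) (Fin 2) F)) =
      {X | ∃ C D, X = (A * C - C * A) + (B * D - D * B)} ∧
    Module.finrank F (LinearMap.range φ) ≤ 2 := by
  have hs : (LinearMap.range φ : Set (Matrix (Fin 2) (Fin 2) F)) =
      {X | ∃ C D, X = (A * C - C * A) + (B * D - D * B)} := by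
    ext X
    subst hφ
    simp [eq_comm]
  refine ⟨hs, ?_⟩
  have hm : ∀ X ∈ LinearMap.range φ, ∃ C D, X = (A * C - C * A) + (B * D - D * B) := by
    intro X hX
    have : X ∈ (LinearMap.range φ : Set (Matrix (Fin 2) (Fin 2) F)) := hX
    rwa [hs] at this
  have e00 := congrFun (congrFun hAB 0) 0
  have e01 := congrFun (congrFun hAB 0) 1
  have e10 := congrFun (congrFun hAB 1) 0
  simp only [Matrix.mul_apply, Fin.sum_univ_two] at e00 e01 e10
  by_cases hA : A 0 0 - A 1 1 = 0 ∧ A 0 1 = 0 ∧ A 1 0 = 0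
  · by_cases hB : B 0 0 - B 1 1 = 0 ∧ B 0 1 = 0 ∧ B 1 0 = 0
    · refine aux_dim _ 1 0 0 (by simp) ?_
      intro X hX
      obtain ⟨C, D, rfl⟩ := hm X hX
      obtain ⟨a1, a2, a3⟩ := hA
      obtain ⟨b1, b2, b3⟩ := hB
      simp only [Matrix.mul_apply, Fin.sum_univ_two, Matrix.add_apply, Matrix.sub_apply,
        a2, a3, b2, b3]
      constructor <;> ring
    · refine aux_dim _ _ _ _ hB ?_
      intro X hX
      obtain ⟨C, D, rfl⟩ := hm X hX
      simp only [Matrix.mul_apply, Fin.sum_univ_two, Matrix.add_apply, Matrix.sub_apply]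
      constructor
      · ring
      · grind
  · refine aux_dim _ _ _ _ hA ?_
    intro X hX
    obtain ⟨C, D, rfl⟩ := hm X hX
    simp only [Matrix.mul_apply, Fin.sum_univ_two, Matrix.add_apply, Matrix.sub_apply]
    constructor
    · ring
    · grind
end

section
/- Let F be a field and let R = F[x_{11}, x_{12}, x_{21}]/(x_{11}, x_{12}, x_{21})² be the quotient of the polynomial ring in three variables by the square of the ideal generated by the variables. Then the 2-by-2 matrix X over R whose entries are (row 1: x̄_{11}, x̄_{12}; row 2: x̄_{21}, -x̄_{11}), where x̄ denotes the image of x in R, has trace 0 but is not a commutator in M_2(R); that is, there are no matrices A, B in M_2(R) with X = AB - BA. -/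
open MvPolynomial in
lemma aux_I (F : Type*) [Field F] (f : MvPolynomial (Fin 3) F)
    (hf : f ∈ (Ideal.span {X 0, X 1, X 2} : Ideal (MvPolynomial (Fin 3) F)) ^ 2)
    (i : Fin 3) : constantCoeff (pderiv i f) = 0 := by
  have h0 : ∀ g ∈ (Ideal.span {X 0, X 1, X 2} : Ideal (MvPolynomial (Fin 3) F)),
      constantCoeff g = 0 := by
    intro g hg
    have : (Ideal.span {X 0, X 1, X 2} : Ideal (MvPolynomial (Fin 3) F))
        ≤ RingHom.ker (constantCoeff (R := F) (σ := Fin 3)) := by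
      rw [Ideal.span_le]
      rintro x (rfl | rfl | rfl) <;> simp [RingHom.mem_ker]
    exact this hg
  rw [pow_two] at hf
  induction hf using Submodule.mul_induction_on' with
  | mem_mul_mem m hm n hn => simp [h0 m hm, h0 n hn]
  | add x _ y _ hx hy => simp [hx, hy]

open MvPolynomial in
lemma aux_lin (F : Type*) [Field F] (u a b : MvPolynomial (Fin 3) F)
    (hf : u * X 0 + a * X 2 + b * X 1 ∈
      (Ideal.span {X 0, X 1, X 2} : Ideal (MvPolynomial (Fin 3) F)) ^ 2) :
    constantCoeff u = 0 ∧ constantCoeff a = 0 ∧ constantCoeff b = 0 := by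
  have h0 := aux_I F _ hf 0
  have h1 := aux_I F _ hf 1
  have h2 := aux_I F _ hf 2
  simp [pderiv_X] at h0 h1 h2
  exact ⟨h0, h2, h1⟩

/-- Over `R = F[x₁₁, x₁₂, x₂₁]/(x₁₁, x₁₂, x₂₁)²`, the matrix
`!![x̄₁₁, x̄₁₂; x̄₂₁, -x̄₁₁]` has trace `0` but is not a commutator in `M₂(R)`. -/
theorem stmt_15 (F : Type*) [Field F]
    (I : Ideal (MvPolynomial (Fin 3) F))
    (hI : I = (Ideal.span {MvPolynomial.X 0, MvPolynomial.X 1, MvPolynomial.X 2}) ^ 2)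
    (M : Matrix (Fin 2) (Fin 2) (MvPolynomial (Fin 3) F ⧸ I))
    (hM : M = !![Ideal.Quotient.mk I (MvPolynomial.X 0),
                 Ideal.Quotient.mk I (MvPolynomial.X 1);
                 Ideal.Quotient.mk I (MvPolynomial.X 2),
                 -Ideal.Quotient.mk I (MvPolynomial.X 0)]) :
    Matrix.trace M = 0 ∧ ¬ ∃ A B, M = A * B - B * A := by
  refine ⟨by simp [hM, Matrix.trace_fin_two], ?_⟩
  rintro ⟨A, B, h⟩
  rw [hM] at h
  have e00 := congrFun (congrFun h 0) 0
  have e01 := congrFun (congrFun h 0) 1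
  have e10 := congrFun (congrFun h 1) 0
  simp [Matrix.mul_apply, Fin.sum_univ_two] at e00 e01 e10
  obtain ⟨a00, h1⟩ := Ideal.Quotient.mk_surjective (A 0 0)
  obtain ⟨a01, h2⟩ := Ideal.Quotient.mk_surjective (A 0 1)
  obtain ⟨a10, h3⟩ := Ideal.Quotient.mk_surjective (A 1 0)
  obtain ⟨a11, h4⟩ := Ideal.Quotient.mk_surjective (A 1 1)
  obtain ⟨b00, h5⟩ := Ideal.Quotient.mk_surjective (B 0 0)
  obtain ⟨b01, h6⟩ := Ideal.Quotient.mk_surjective (B 0 1)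
  obtain ⟨b10, h7⟩ := Ideal.Quotient.mk_surjective (B 1 0)
  obtain ⟨b11, h8⟩ := Ideal.Quotient.mk_surjective (B 1 1)
  simp only [← h1, ← h2, ← h3, ← h4, ← h5, ← h6, ← h7, ← h8] at e00 e01 e10
  have hp := aux_lin F (a00 - a11) a01 a10 (by
    rw [← hI, ← Ideal.Quotient.eq_zero_iff_mem]
    simp only [map_add, map_mul, map_sub]
    rw [e00, e01, e10]; ring)
  have hq := aux_lin F (b00 - b11) b01 b10 (by
    rw [← hI, ← Ideal.Quotient.eq_zero_iff_mem]
    simp only [map_add, map_mul, map_sub]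
    rw [e00, e01, e10]; ring)
  have hz := aux_I F (MvPolynomial.X 0 - (a01 * b10 - a10 * b01)) (by
    rw [← hI, ← Ideal.Quotient.eq_zero_iff_mem]
    simp only [map_mul, map_sub]
    rw [e00]; ring) 0
  simp [hp.2.1, hp.2.2, hq.2.1, hq.2.2] at hz
end

section
/- Let F be a field, R a commutative F-algebra, and I an ideal of R such that the canonical map from F to R/I (induced by the algebra structure) is bijective, and such that the F-vector space I/I² has dimension at least 3. Then there exists a 2-by-2 matrix X over R with trace 0 that is not a commutator in M_2(R); that is, there are no A, B in M_2(R) with X = AB - BA. -/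
theorem aux_mem {F : Type*} [Field F] {R : Type*} [CommRing R] [Algebra F R]
    (I : Ideal R) (hsurj : Function.Surjective (algebraMap F (R ⧸ I)))
    (f : Fin 3 → I) (hf : LinearIndependent F (fun i => I.toCotangent (f i)))
    (v : Fin 3 → R) (h : v 0 * f 0 + v 1 * f 1 + v 2 * f 2 = 0) (i : Fin 3) : v i ∈ I := by
  have key : ∀ r : R, ∃ s : F, r - algebraMap F R s ∈ I := by
    intro r
    obtain ⟨s, hs⟩ := hsurj (Ideal.Quotient.mk I r)
    refine ⟨s, ?_⟩
    rw [← Ideal.Quotient.eq, ← hs]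
    rfl
  choose s hs using fun i => key (v i)
  have h1 : ∀ i, s i • I.toCotangent (f i) = I.toCotangent (v i • f i) := by
    intro i
    rw [← algebraMap_smul R (s i) (I.toCotangent (f i)), ← map_smul, Ideal.toCotangent_eq]
    have : ((algebraMap F R (s i) • f i : I) : R) - ((v i • f i : I) : R)
        = - ((v i - algebraMap F R (s i)) * f i) := by
      simp [Algebra.smul_def]; ring
    rw [this, pow_two]
    exact neg_mem (Ideal.mul_mem_mul (hs i) (f i).2)
  have h2 : ∑ i, s i • I.toCotangent (f i) = 0 := by
    simp only [h1]
    rw [← map_sum]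
    have : ∑ i, v i • f i = 0 := by
      ext
      simpa [Fin.sum_univ_three] using h
    rw [this, map_zero]
  have h3 := Fintype.linearIndependent_iff.1 hf s h2 i
  have := hs i
  rwa [h3, map_zero, sub_zero] at this

/-- If `R` is a commutative `F`-algebra and `I ⊆ R` an ideal with `R/I = F` (the canonical
map `F → R/I` being bijective) and `dim_F I/I² ≥ 3`, then there is a `2×2` matrix over `R`
with trace `0` that is not a commutator in `M₂(R)`. -/
theorem stmt_16 {F : Type*} [Field F] {R : Type*} [CommRing R] [Algebra F R]
    (I : Ideal R)
    (hbij : Function.Bijective (algebraMap F (R ⧸ I)))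
    (hdim : 3 ≤ Module.rank F I.Cotangent) :
    ∃ X : Matrix (Fin 2) (Fin 2) R, Matrix.trace X = 0 ∧
      ¬ ∃ A B, X = A * B - B * A := by
  obtain ⟨g, hg⟩ : ∃ g : Fin 3 → I.Cotangent, LinearIndependent F g := by
    exact (Module.le_rank_iff (n := 3)).1 (by exact_mod_cast hdim)
  choose f hf using fun i => I.toCotangent_surjective (g i)
  obtain rfl : (fun i => I.toCotangent (f i)) = g := funext hf
  refine ⟨!![(f 0 : R), f 1; f 2, -f 0], by simp [Matrix.trace_fin_two], ?_⟩
  rintro ⟨A, B, h⟩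
  have e0 := congrFun (congrFun h 0) 0
  have e1 := congrFun (congrFun h 0) 1
  have e2 := congrFun (congrFun h 1) 0
  simp [Matrix.mul_apply, Fin.sum_univ_two] at e0 e1 e2
  have hA := aux_mem I hbij.2 f hg ![A 0 0 - A 1 1, A 1 0, A 0 1] (by
    simp [e0, e1, e2]; ring)
  have hB := aux_mem I hbij.2 f hg ![B 0 0 - B 1 1, B 1 0, B 0 1] (by
    simp [e0, e1, e2]; ring)
  apply hg.ne_zero 0
  rw [Ideal.toCotangent_eq_zero]
  have : (f 0 : R) = A 0 1 * B 1 0 - B 0 1 * A 1 0 := by rw [e0]; ring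
  rw [this, pow_two]
  exact sub_mem (Ideal.mul_mem_mul (hA 2) (hB 1)) (Ideal.mul_mem_mul (hB 2) (hA 1))
end

section
/- Let p be a prime number and let R be a ring of characteristic p. In the matrix ring M_p(R), let X = Σ_{i=1}^{p-1} E_{i,i+1} and Y = Σ_{i=1}^{p-1} i·E_{i+1,i}. Then XY - YX = 1 (the identity matrix), and the trace of (XY)^{p-1} equals p - 1 (equivalently, equals -1 in R). -/
/-- In `M_p(R)` over a ring `R` of prime characteristic `p`, with
`X = Σ_{i=1}^{p-1} E_{i,i+1}` and `Y = Σ_{i=1}^{p-1} i·E_{i+1,i}`, one has `XY - YX = 1`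
and `trace ((XY)^(p-1)) = p - 1`. -/
theorem stmt_17 (p : ℕ) (hp : p.Prime) (R : Type*) [Ring R] [CharP R p]
    (X Y : Matrix (Fin p) (Fin p) R)
    (hX : X = Matrix.of fun i j : Fin p => if (j : ℕ) = (i : ℕ) + 1 then (1 : R) else 0)
    (hY : Y = Matrix.of fun i j : Fin p =>
      if (i : ℕ) = (j : ℕ) + 1 then (((j : ℕ) + 1 : ℕ) : R) else 0) :
    X * Y - Y * X = 1 ∧ Matrix.trace ((X * Y) ^ (p - 1)) = ((p - 1 : ℕ) : R) := by
  have h0 : ((p : ℕ) : R) = 0 := CharP.cast_eq_zero R p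
  have hXY : X * Y = Matrix.diagonal fun i : Fin p => (((i : ℕ) + 1 : ℕ) : R) := by
    ext i k
    rw [Matrix.mul_apply, Matrix.diagonal_apply]
    subst hX hY
    simp only [Matrix.of_apply]
    by_cases hi : (i : ℕ) + 1 < p
    · rw [Finset.sum_eq_single (⟨(i : ℕ) + 1, hi⟩ : Fin p)]
      · by_cases hik : i = k
        · subst hik; simp
        · have : (i : ℕ) ≠ k := fun h => hik (Fin.ext h)
          simp [hik, this]
      · intro j _ hj
        have : (j : ℕ) ≠ i + 1 := fun h => hj (Fin.ext h)
        rw [if_neg this, zero_mul]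
      · simp
    · have hip : (i : ℕ) + 1 = p := by omega
      rw [Finset.sum_eq_zero, hip, h0, ite_self]
      intro j _
      have : (j : ℕ) ≠ i + 1 := by omega
      rw [if_neg this, zero_mul]
  have hYX : Y * X = Matrix.diagonal fun i : Fin p => ((i : ℕ) : R) := by
    ext i k
    rw [Matrix.mul_apply, Matrix.diagonal_apply]
    subst hX hY
    simp only [Matrix.of_apply]
    by_cases hi : (i : ℕ) = 0
    · rw [Finset.sum_eq_zero, hi, Nat.cast_zero, ite_self]
      intro j _
      have : (i : ℕ) ≠ j + 1 := by omega
      rw [if_neg this, zero_mul]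
    · have e : (i : ℕ) - 1 + 1 = i := by omega
      rw [Finset.sum_eq_single (⟨(i : ℕ) - 1, by omega⟩ : Fin p)]
      · simp only [e, if_true]
        by_cases hik : i = k
        · subst hik; simp
        · have : (k : ℕ) ≠ i := fun h => hik (Fin.ext h.symm)
          simp [hik, this]
      · intro j _ hj
        have : (i : ℕ) ≠ j + 1 := fun h => hj (Fin.ext (by simp; omega))
        rw [if_neg this, zero_mul]
      · simp
  constructor
  · rw [hXY, hYX, Matrix.diagonal_sub, ← Matrix.diagonal_one]
    congr 1
    ext i
    push_cast
    simp
  · rw [hXY, Matrix.diagonal_pow, Matrix.trace_diagonal]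
    simp only [Pi.pow_apply]
    rw [Fin.sum_univ_eq_sum_range (fun i => (((i + 1 : ℕ) : R)) ^ (p - 1)) p]
    have hp2 := hp.two_le
    obtain ⟨n, rfl⟩ : ∃ n, p = n + 1 := ⟨p - 1, by omega⟩
    rw [Finset.sum_range_succ, h0, Nat.add_sub_cancel, zero_pow (by omega), add_zero]
    rw [Finset.sum_congr rfl (g := fun _ => (1 : R))]
    · simp
    · intro i hi
      have hi := Finset.mem_range.1 hi
      have hc : Nat.Coprime (i + 1) (n + 1) :=
        (Nat.coprime_of_lt_prime (by omega) (by omega) hp).symm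
      have := Nat.ModEq.pow_totient hc
      rw [Nat.totient_prime hp, Nat.add_sub_cancel] at this
      have := (CharP.natCast_eq_natCast R (n + 1)).2 this
      simpa using this
end

section
/- Every ring can be embedded in a commutator ring: for every ring R there exist a ring S and an injective ring homomorphism from R to S such that every element of S is a sum of commutators of elements of S (in fact S can be chosen so that every element of S is a single commutator). -/
universe u

/-- The shift on the countable direct sum of copies of `R`. -/
noncomputable def shiftHom (R : Type u) [Ring R] : (ℕ →₀ R) →+ (ℕ →₀ R) :=
  Finsupp.liftAddHom (fun i => Finsupp.singleAddHom (i + 1))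

/-- The columns of the solution `B` of `X B - B X = A`. -/
noncomputable def solCol (R : Type u) [Ring R] (A : (ℕ →₀ R) →+ (ℕ →₀ R)) :
    ℕ → (R →+ (ℕ →₀ R))
  | 0 => 0
  | i + 1 => (shiftHom R).comp (solCol R A i) - A.comp (Finsupp.singleAddHom i)

/-- Every ring embeds in a commutator ring; in fact in a ring in which every element is a
single commutator. -/
theorem stmt_18 (R : Type u) [Ring R] :
    ∃ (S : Type u) (_ : Ring S) (f : R →+* S),
      Function.Injective f ∧ ∀ s : S, ∃ a b : S, s = a * b - b * a := by
  refine ⟨AddMonoid.End (ℕ →₀ R), inferInstance, Module.toAddMonoidEnd R (ℕ →₀ R), ?_, ?_⟩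
  · intro r s h
    have h1 := DFunLike.congr_fun h (Finsupp.single 0 1)
    have h2 := DFunLike.congr_fun h1 0
    change (r • Finsupp.single 0 (1 : R) : ℕ →₀ R) 0 = (s • Finsupp.single 0 (1 : R) : ℕ →₀ R) 0 at h2
    simpa using h2
  · intro A
    let B : (ℕ →₀ R) →+ (ℕ →₀ R) := Finsupp.liftAddHom (solCol R A)
    refine ⟨shiftHom R, B, ?_⟩
    refine Finsupp.addHom_ext (fun i r => ?_)
    change A _ = shiftHom R (B _) - B (shiftHom R _)
    have hX : shiftHom R (Finsupp.single i r) = Finsupp.single (i + 1) r := by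
      simp [shiftHom]
    have hB : ∀ j, B (Finsupp.single j r) = solCol R A j r := by
      intro j
      simp [B]
    rw [hX, hB, hB]
    change _ = _ - (shiftHom R (solCol R A i r) - A (Finsupp.single i r))
    abel
end
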